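/- Let ρ be a density matrix on ℂ^n with spectral decomposition ρ = Σ_i p_i v_i v_i†, and let A be a Hermitian n×n complex matrix. Then I_SLD(ρ,A) ≤ V_ρ(A), i.e. (1/2) Σ_{i,j} (p_i − p_j)²/(p_i + p_j) |v_i† A v_j|² ≤ Tr[ρA²] − (Tr[ρA])². -/

import Mathlib

open Matrix
open scoped ComplexOrder

/-- The variance `V_ρ(X) = Tr[ρX²] − (Tr[ρX])²`. -/
noncomputable def matVariance {n : ℕ} (ρ X : Matrix (Fin n) (Fin n) ℂ) : ℝ :=
  ((ρ * (X * X)).trace).re - (((ρ * X).trace).re) ^ 2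

/-- The SLD skew information `I_SLD(ρ,A) = (1/2) Σ_{i,j} (p_i−p_j)²/(p_i+p_j) |v_i† A v_j|²`,
expressed via a spectral decomposition of `ρ` with eigenvalues `p` and orthonormal
eigenvectors `v`.  (Terms with `p i + p j = 0` vanish, since division by zero is zero.) -/
noncomputable def sldSkew {n : ℕ} (p : Fin n → ℝ) (v : Fin n → Fin n → ℂ)
    (A : Matrix (Fin n) (Fin n) ℂ) : ℝ :=
  (1 / 2) * ∑ i, ∑ j, (p i - p j) ^ 2 / (p i + p j) * ‖star (v i) ⬝ᵥ A.mulVec (v j)‖ ^ 2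

/-!
Write `a i j = v_i† A v_j`. Since `(p - q)² / (p + q) = p + q - 2 (2 p q / (p + q))`, the skew
information is `Tr[ρA²]` minus the sum of `|a i j|²` weighted by the harmonic means of the
eigenvalues `p i` and `p j`. All these weights are nonnegative, and the diagonal ones are the `p i`
themselves, so this sum is at least `∑ i, p i * |a i i|²`, which dominates
`(∑ i, p i * a i i)² = (Tr[ρA])²` by Cauchy–Schwarz.
-/

section HarmonicMean

variable {K : Type*} [Field K]

/-- The harmonic mean of two nonnegative scalars, the weight of a pair of eigenvalues in the gap
between `Tr[ρA²]` and the SLD skew information. At `(0, 0)` it is zero, by division by zero. -/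
def harmonicMean (a b : K) : K :=
  2 * a * b / (a + b)

lemma harmonicMean_self [NeZero (2 : K)] (a : K) : harmonicMean a a = a := by
  unfold harmonicMean
  rcases eq_or_ne a 0 with rfl | ha
  · simp
  · rw [← two_mul, mul_div_cancel_left₀ a (mul_ne_zero two_ne_zero ha)]

variable [LinearOrder K] [IsStrictOrderedRing K]

lemma harmonicMean_nonneg {a b : K} (ha : 0 ≤ a) (hb : 0 ≤ b) : 0 ≤ harmonicMean a b := by
  unfold harmonicMean
  positivity

lemma sub_sq_div_add_eq_add_sub_harmonicMean {a b : K} (ha : 0 ≤ a) (hb : 0 ≤ b) :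
    (a - b) ^ 2 / (a + b) = a + b - 2 * harmonicMean a b := by
  unfold harmonicMean
  rcases (add_nonneg ha hb).eq_or_lt with hab | hab
  · obtain ⟨rfl, rfl⟩ := (add_eq_zero_iff_of_nonneg ha hb).mp hab.symm
    simp
  · field_simp
    ring

variable {ι : Type*} [Fintype ι] {p : ι → K} {w : ι → ι → K}

lemma sum_mul_diag_le_sum_harmonicMean_mul (hp : ∀ i, 0 ≤ p i) (hw : ∀ i j, 0 ≤ w i j) :
    ∑ i, p i * w i i ≤ ∑ i, ∑ j, harmonicMean (p i) (p j) * w i j := by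
  refine Finset.sum_le_sum fun i _ => ?_
  calc p i * w i i = harmonicMean (p i) (p i) * w i i := by rw [harmonicMean_self]
    _ ≤ ∑ j, harmonicMean (p i) (p j) * w i j :=
      Finset.single_le_sum (f := fun j => harmonicMean (p i) (p j) * w i j)
        (fun j _ => mul_nonneg (harmonicMean_nonneg (hp i) (hp j)) (hw i j)) (Finset.mem_univ i)

lemma half_sum_sub_sq_div_add_mul (hp : ∀ i, 0 ≤ p i) (hw : ∀ i j, w i j = w j i) :
    (1 / 2) * ∑ i, ∑ j, (p i - p j) ^ 2 / (p i + p j) * w i j =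
      ∑ i, ∑ j, p i * w i j - ∑ i, ∑ j, harmonicMean (p i) (p j) * w i j := by
  have hswap : ∑ i, ∑ j, p j * w i j = ∑ i, ∑ j, p i * w i j := by
    rw [Finset.sum_comm]
    simp only [hw]
  have hsplit : ∑ i, ∑ j, (p i - p j) ^ 2 / (p i + p j) * w i j =
      ∑ i, ∑ j, p i * w i j + ∑ i, ∑ j, p j * w i j
        - 2 * ∑ i, ∑ j, harmonicMean (p i) (p j) * w i j := by
    simp only [sub_sq_div_add_eq_add_sub_harmonicMean (hp _) (hp _), sub_mul, add_mul, mul_assoc,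
      Finset.sum_sub_distrib, Finset.sum_add_distrib, Finset.mul_sum]
  rw [hsplit, hswap]
  ring

end HarmonicMean

section RankOneDecomposition

variable {R n ι : Type*} [CommRing R] [Fintype n] [Fintype ι]

lemma trace_sum_smul_vecMulVec_mul (c : ι → R) (u v : ι → n → R) (X : Matrix n n R) :
    ((∑ i, c i • vecMulVec (u i) (v i)) * X).trace = ∑ i, c i * (v i ⬝ᵥ X *ᵥ u i) := by
  simp only [Finset.sum_mul, trace_sum, smul_mul_assoc, trace_smul, vecMulVec_mul,
    trace_vecMulVec, smul_eq_mul, dotProduct_mulVec, dotProduct_comm (u _)]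

variable [StarRing R]

lemma sum_vecMulVec_star_eq_one [DecidableEq n] {v : n → n → R}
    (hv : ∀ i j, star (v i) ⬝ᵥ v j = if i = j then 1 else 0) :
    ∑ j, vecMulVec (v j) (star (v j)) = 1 := by
  have hgram : (of v)ᵀᴴ * (of v)ᵀ = 1 := by
    ext i j
    simpa [one_apply, mul_apply, dotProduct] using hv i j
  rw [← mul_eq_one_comm.mp hgram]
  ext i j
  simp [mul_apply, Matrix.sum_apply, vecMulVec_apply]

lemma star_dotProduct_self_eq_sum [DecidableEq n] {v : ι → n → R}
    (hv : ∑ j, vecMulVec (v j) (star (v j)) = 1) (x : n → R) :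
    star x ⬝ᵥ x = ∑ j, star (star (v j) ⬝ᵥ x) * (star (v j) ⬝ᵥ x) := by
  calc star x ⬝ᵥ x = star x ⬝ᵥ (∑ j, vecMulVec (v j) (star (v j))) *ᵥ x := by
        rw [hv, one_mulVec]
    _ = ∑ j, star (star (v j) ⬝ᵥ x) * (star (v j) ⬝ᵥ x) := by
        simp only [sum_mulVec, vecMulVec_mulVec, dotProduct_sum, dotProduct_smul,
          ← star_dotProduct, op_smul_eq_smul, smul_eq_mul, mul_comm]

variable {A : Matrix n n R}

lemma star_star_dotProduct_mulVec (hA : A.IsHermitian) (x y : n → R) :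
    star (star x ⬝ᵥ A *ᵥ y) = star y ⬝ᵥ A *ᵥ x := by
  rw [← star_dotProduct_star, star_star, star_mulVec, hA.eq, dotProduct_mulVec]

lemma star_dotProduct_mul_self_mulVec (hA : A.IsHermitian) (x : n → R) :
    star x ⬝ᵥ (A * A) *ᵥ x = star (A *ᵥ x) ⬝ᵥ (A *ᵥ x) := by
  rw [star_mulVec, hA.eq, ← dotProduct_mulVec, mulVec_mulVec]

end RankOneDecomposition

section ComplexMatrix

variable {n ι : Type*} [Fintype n] [Fintype ι] {A : Matrix n n ℂ}

lemma norm_star_dotProduct_mulVec_comm (hA : A.IsHermitian) (x y : n → ℂ) :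
    ‖star x ⬝ᵥ A *ᵥ y‖ = ‖star y ⬝ᵥ A *ᵥ x‖ := by
  rw [← star_star_dotProduct_mulVec hA, norm_star]

lemma re_trace_sum_smul_vecMulVec_star_mul (p : ι → ℝ) (v : ι → n → ℂ) (X : Matrix n n ℂ) :
    ((∑ i, (p i : ℂ) • vecMulVec (v i) (star (v i))) * X).trace.re =
      ∑ i, p i * (star (v i) ⬝ᵥ X *ᵥ v i).re := by
  simp only [trace_sum_smul_vecMulVec_mul, Complex.re_sum, Complex.re_ofReal_mul]

lemma re_star_dotProduct_mul_self_mulVec [DecidableEq n] (hA : A.IsHermitian) {v : ι → n → ℂ}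
    (hv : ∑ j, vecMulVec (v j) (star (v j)) = 1) (x : n → ℂ) :
    (star x ⬝ᵥ (A * A) *ᵥ x).re = ∑ j, ‖star x ⬝ᵥ A *ᵥ v j‖ ^ 2 := by
  rw [star_dotProduct_mul_self_mulVec hA, star_dotProduct_self_eq_sum hv, Complex.re_sum]
  refine Finset.sum_congr rfl fun j _ => ?_
  rw [norm_star_dotProduct_mulVec_comm hA x, ← starRingEnd_apply, Complex.conj_mul',
    ← Complex.ofReal_pow, Complex.ofReal_re]

lemma sq_sum_mul_re_le_sum_mul_norm_sq {p : ι → ℝ} (hp : ∀ i, 0 ≤ p i) (hp1 : ∑ i, p i ≤ 1)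
    (z : ι → ℂ) : (∑ i, p i * (z i).re) ^ 2 ≤ ∑ i, p i * ‖z i‖ ^ 2 := by
  have hre (i : ι) : (z i).re ^ 2 ≤ ‖z i‖ ^ 2 :=
    sq_le_sq.mpr ((Complex.abs_re_le_norm _).trans (le_abs_self _))
  have hterm (i : ι) : 0 ≤ p i * ‖z i‖ ^ 2 := mul_nonneg (hp i) (sq_nonneg _)
  calc (∑ i, p i * (z i).re) ^ 2 ≤ (∑ i, p i) * ∑ i, p i * ‖z i‖ ^ 2 := by
        refine Finset.sum_sq_le_sum_mul_sum_of_sq_le_mul _ (fun i _ => hp i)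
          (fun i _ => hterm i) fun i _ => ?_
        calc (p i * (z i).re) ^ 2 = p i ^ 2 * (z i).re ^ 2 := mul_pow ..
          _ ≤ p i ^ 2 * ‖z i‖ ^ 2 := mul_le_mul_of_nonneg_left (hre i) (sq_nonneg _)
          _ = p i * (p i * ‖z i‖ ^ 2) := by ring
    _ ≤ ∑ i, p i * ‖z i‖ ^ 2 :=
        mul_le_of_le_one_left (Finset.sum_nonneg fun i _ => hterm i) hp1

end ComplexMatrix

theorem sldSkew_le_variance_general {n : ℕ} (ρ A : Matrix (Fin n) (Fin n) ℂ)
    (htr : ρ.trace ≤ 1) (hA : A.IsHermitian)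
    (p : Fin n → ℝ) (v : Fin n → Fin n → ℂ) (hp : ∀ i, 0 ≤ p i)
    (horth : ∀ i j, star (v i) ⬝ᵥ v j = if i = j then 1 else 0)
    (hdec : ρ = ∑ i, (p i : ℂ) • vecMulVec (v i) (star (v i))) :
    sldSkew p v A ≤ matVariance ρ A := by
  set a : Fin n → Fin n → ℂ := fun i j => star (v i) ⬝ᵥ A *ᵥ v j
  have hp1 : ∑ i, p i ≤ 1 := by
    have htrace : ρ.trace = ∑ i, (p i : ℂ) := by
      simp [hdec, trace_sum, trace_smul, trace_vecMulVec, dotProduct_comm (v _), horth]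
    exact_mod_cast htrace ▸ htr
  have hmean : (ρ * A).trace.re = ∑ i, p i * (a i i).re := by
    rw [hdec, re_trace_sum_smul_vecMulVec_star_mul]
  have hsecond : (ρ * (A * A)).trace.re = ∑ i, ∑ j, p i * ‖a i j‖ ^ 2 := by
    simp only [hdec, re_trace_sum_smul_vecMulVec_star_mul, a, Finset.mul_sum,
      re_star_dotProduct_mul_self_mulVec hA (sum_vecMulVec_star_eq_one horth)]
  calc sldSkew p v A
      = ∑ i, ∑ j, p i * ‖a i j‖ ^ 2 - ∑ i, ∑ j, harmonicMean (p i) (p j) * ‖a i j‖ ^ 2 :=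
        half_sum_sub_sq_div_add_mul hp fun i j => by
          rw [norm_star_dotProduct_mulVec_comm hA]
    _ ≤ ∑ i, ∑ j, p i * ‖a i j‖ ^ 2 - ∑ i, p i * ‖a i i‖ ^ 2 :=
        sub_le_sub_left (sum_mul_diag_le_sum_harmonicMean_mul hp fun _ _ => sq_nonneg _) _
    _ ≤ ∑ i, ∑ j, p i * ‖a i j‖ ^ 2 - (∑ i, p i * (a i i).re) ^ 2 :=
        sub_le_sub_left (sq_sum_mul_re_le_sum_mul_norm_sq hp hp1 fun i => a i i) _
    _ = matVariance ρ A := by rw [matVariance, hsecond, hmean]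

/-- Property P1 for the SLD skew information: `I_SLD(ρ,A) ≤ V_ρ(A)`. -/
theorem sldSkew_le_variance {n : ℕ}
    (ρ A : Matrix (Fin n) (Fin n) ℂ)
    (hρ : ρ.PosSemidef) (htr : ρ.trace = 1)
    (hA : A.IsHermitian)
    (p : Fin n → ℝ) (v : Fin n → Fin n → ℂ)
    (hp : ∀ i, 0 ≤ p i)
    (horth : ∀ i j, star (v i) ⬝ᵥ v j = if i = j then 1 else 0)
    (hdec : ρ = ∑ i, (p i : ℂ) • vecMulVec (v i) (star (v i))) :
    sldSkew p v A ≤ matVariance ρ A :=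
  sldSkew_le_variance_general ρ A htr.le hA p v hp horth hdec
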